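/- arXiv:2305.04305 — 2 statements merged into one kernel-verified Lean document; each statement's English description precedes it below -/
import Mathlib

section
/- In the online Ramsey game with targets red C₄ and blue P₆, consider the position in which the five edges v₁v₂, v₂v₃, v₃v₄, v₄v₅, v₅v₆ of a path on six distinct vertices have been colored blue, red, red, red, blue respectively (case R5). From this position Builder can force a red copy of C₄ or a blue copy of P₆ within at most 6 additional rounds, so within at most 11 rounds in total. -/
open SimpleGraph

/-- The set `S` of edges of the infinite complete graph on `ℕ` contains a copy of
the graph `G`: there is an injective map of the vertices of `G` into `ℕ` sending
every edge of `G` into `S`. -/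
def HasCopy {V : Type*} (G : SimpleGraph V) (S : Set (Sym2 ℕ)) : Prop :=
  ∃ f : V → ℕ, Function.Injective f ∧ ∀ a b, G.Adj a b → s(f a, f b) ∈ S

/-- `BuilderWinsIn G H R B r` means: in the online Ramsey game with targets a red copy
of `G` and a blue copy of `H`, from the position in which the edges in `R` have been
colored red and the edges in `B` have been colored blue, Builder has a strategy that
guarantees, against every Painter strategy, that within at most `r` further rounds the
colored edges contain a red copy of `G` or a blue copy of `H`.  (In each round Builder
chooses a previously unchosen non-loop edge of the infinite complete graph on `ℕ`, and
Painter immediately colors it red or blue; so Builder wins within `r + 1` rounds iff he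
has already won, or he can choose an edge such that whichever color Painter gives it,
he can win within `r` further rounds.) -/
def BuilderWinsIn {V W : Type*} (G : SimpleGraph V) (H : SimpleGraph W) :
    Set (Sym2 ℕ) → Set (Sym2 ℕ) → ℕ → Prop
  | R, B, 0 => HasCopy G R ∨ HasCopy H B
  | R, B, (r + 1) => HasCopy G R ∨ HasCopy H B ∨
      ∃ e : Sym2 ℕ, ¬ e.IsDiag ∧ e ∉ R ∧ e ∉ B ∧
        BuilderWinsIn G H (insert e R) B r ∧ BuilderWinsIn G H R (insert e B) r

/-- The online size Ramsey number `ř(G, H)`: the least `t` such that, starting from the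
empty position, Builder can force a red copy of `G` or a blue copy of `H` within at
most `t` rounds. -/
noncomputable def onlineRamsey {V W : Type*} (G : SimpleGraph V) (H : SimpleGraph W) : ℕ :=
  sInf {t | BuilderWinsIn G H ∅ ∅ t}


/-- Certificate for a Builder strategy on seven vertices: a red four-cycle, a blue path on
six vertices, or a move followed by the answers to red and to blue. -/
inductive Strat where
  | red (a b c d : Fin 7) : Strat
  | blue (a b c d e g : Fin 7) : Strat
  | move (a b : Fin 7) (x y : Strat) : Strat

/-- The edge `ab` is in the list `L`. -/
def hasEdge (L : List (Fin 7 × Fin 7)) (a b : Fin 7) : Bool :=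
  L.contains (a, b) || L.contains (b, a)

/-- Validity of a strategy certificate. -/
def Strat.ok : Strat → List (Fin 7 × Fin 7) → List (Fin 7 × Fin 7) → ℕ → Bool
  | .red a b c d, R, _, _ => [a, b, c, d].Nodup && (hasEdge R a b && hasEdge R b c &&
      hasEdge R c d && hasEdge R d a)
  | .blue a b c d e g, _, B, _ => [a, b, c, d, e, g].Nodup && (hasEdge B a b && hasEdge B b c &&
      hasEdge B c d && hasEdge B d e && hasEdge B e g)
  | .move _ _ _ _, _, _, 0 => false
  | .move a b x y, R, B, n + 1 => a != b && !hasEdge R a b && !hasEdge B a b &&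
      x.ok ((a, b) :: R) B n && y.ok R ((a, b) :: B) n

/-- The set of edges of `ℕ` described by a list. -/
def listEdges (f : Fin 7 → ℕ) (L : List (Fin 7 × Fin 7)) : Set (Sym2 ℕ) :=
  {e | ∃ p ∈ L, e = s(f p.1, f p.2)}

theorem listEdges_cons (f : Fin 7 → ℕ) (a b : Fin 7) (L : List (Fin 7 × Fin 7)) :
    listEdges f ((a, b) :: L) = insert s(f a, f b) (listEdges f L) := by
  ext e
  simp [listEdges]

theorem mem_listEdges {f : Fin 7 → ℕ} (hf : Function.Injective f) (a b : Fin 7)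
    (L : List (Fin 7 × Fin 7)) : s(f a, f b) ∈ listEdges f L ↔ hasEdge L a b = true := by
  simp only [listEdges, hasEdge, Set.mem_ofPred_eq, Sym2.eq_iff, hf.eq_iff, Bool.or_eq_true,
    List.contains_iff_mem]
  constructor
  · rintro ⟨⟨p, q⟩, hp, ⟨rfl, rfl⟩ | ⟨rfl, rfl⟩⟩
    · exact Or.inl hp
    · exact Or.inr hp
  · rintro (h | h)
    · exact ⟨_, h, Or.inl ⟨rfl, rfl⟩⟩
    · exact ⟨_, h, Or.inr ⟨rfl, rfl⟩⟩

theorem wins_of_red {R B : Set (Sym2 ℕ)} {n : ℕ} (h : HasCopy (cycleGraph 4) R) :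
    BuilderWinsIn (cycleGraph 4) (pathGraph 6) R B n := by
  cases n
  · exact Or.inl h
  · exact Or.inl h

theorem wins_of_blue {R B : Set (Sym2 ℕ)} {n : ℕ} (h : HasCopy (pathGraph 6) B) :
    BuilderWinsIn (cycleGraph 4) (pathGraph 6) R B n := by
  cases n
  · exact Or.inr h
  · exact Or.inr (Or.inl h)

theorem hasEdge_symm {L : List (Fin 7 × Fin 7)} {a b : Fin 7} (h : hasEdge L a b = true) :
    hasEdge L b a = true := by
  unfold hasEdge at *
  rwa [Bool.or_comm]

theorem Strat.sound {f : Fin 7 → ℕ} (hf : Function.Injective f) (t : Strat) :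
    ∀ (R B : List (Fin 7 × Fin 7)) (n : ℕ), t.ok R B n = true →
      BuilderWinsIn (cycleGraph 4) (pathGraph 6) (listEdges f R) (listEdges f B) n := by
  induction t with
  | red a b c d =>
    intro R B n h
    simp only [Strat.ok, Bool.and_eq_true, decide_eq_true_eq] at h
    obtain ⟨hn, ⟨⟨h1, h2⟩, h3⟩, h4⟩ := h
    refine wins_of_red ⟨fun i => f ([a, b, c, d].get i), hf.comp hn.injective_get, ?_⟩
    intro i j hij
    rw [mem_listEdges hf]
    have key : ∀ i j : Fin 4, (cycleGraph 4).Adj i j → j = i + 1 ∨ i = j + 1 := by decide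
    rcases key i j hij with rfl | rfl
    · fin_cases i
      exacts [h1, h2, h3, h4]
    · apply hasEdge_symm
      fin_cases j
      exacts [h1, h2, h3, h4]
  | blue a b c d e g =>
    intro R B n h
    simp only [Strat.ok, Bool.and_eq_true, decide_eq_true_eq] at h
    obtain ⟨hn, ⟨⟨⟨h1, h2⟩, h3⟩, h4⟩, h5⟩ := h
    refine wins_of_blue ⟨fun i => f ([a, b, c, d, e, g].get i), hf.comp hn.injective_get, ?_⟩
    intro i j hij
    rw [mem_listEdges hf]
    have main : ∀ k : ℕ, ∀ (hk : k + 1 < 6), hasEdge B ([a, b, c, d, e, g].get ⟨k, by simp; omega⟩)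
        ([a, b, c, d, e, g].get ⟨k + 1, hk⟩) = true := by
      intro k hk
      have : k < 5 := by omega
      interval_cases k
      exacts [h1, h2, h3, h4, h5]
    obtain ⟨i, hi⟩ := i
    obtain ⟨j, hj⟩ := j
    rw [pathGraph_adj] at hij
    rcases hij with hij | hij
    · simp only at hij
      subst hij
      exact main i hj
    · simp only at hij
      subst hij
      exact hasEdge_symm (main j hi)
  | move a b x y ihx ihy =>
    intro R B n h
    cases n with
    | zero => simp [Strat.ok] at h
    | succ n =>
      simp only [Strat.ok, Bool.and_eq_true, Bool.not_eq_true', bne_iff_ne] at h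
      obtain ⟨⟨⟨⟨h1, h2⟩, h3⟩, h4⟩, h5⟩ := h
      refine Or.inr (Or.inr ⟨s(f a, f b), ?_, ?_, ?_, ?_, ?_⟩)
      · simpa [hf.eq_iff] using h1
      · rw [mem_listEdges hf, h2]
        simp
      · rw [mem_listEdges hf, h3]
        simp
      · rw [← listEdges_cons]
        exact ihx _ _ _ h4
      · rw [← listEdges_cons]
        exact ihy _ _ _ h5

/-- Builder's strategy; vertex `6` is a fresh vertex. -/
def strategyR5 : Strat :=
  (.move 0 2
   (.move 0 3
   (.move 0 4
   (.red 0 2 3 4) (.move 0 5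
   (.move 1 3
   (.red 0 2 1 3) (.move 2 5
   (.red 0 3 2 5) (.blue 2 5 4 0 1 3))) (.move 1 3
   (.red 0 2 1 3) (.move 2 4
   (.red 0 2 4 3) (.blue 2 4 5 0 1 3))))) (.move 0 4
   (.red 0 2 3 4) (.move 1 6
   (.move 1 4
   (.red 1 2 3 4) (.move 3 6
   (.red 1 2 3 6) (.blue 5 4 1 0 3 6))) (.move 0 5
   (.move 1 5
   (.red 0 2 1 5) (.blue 3 0 4 5 1 6)) (.move 1 4
   (.red 1 2 3 4) (.blue 3 0 5 4 1 6)))))) (.move 0 3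
   (.move 0 4
   (.move 1 5
   (.move 1 4
   (.red 1 2 3 4) (.move 3 5
   (.red 1 2 3 5) (.blue 2 0 1 4 5 3))) (.move 0 6
   (.move 2 6
   (.red 0 3 2 6) (.blue 4 5 1 0 2 6)) (.move 2 4
   (.red 0 3 2 4) (.blue 1 5 4 2 0 6)))) (.move 1 5
   (.move 1 4
   (.red 1 2 3 4) (.move 3 5
   (.red 1 2 3 5) (.blue 2 0 1 4 5 3))) (.move 2 6
   (.move 4 6
   (.red 2 3 4 6) (.blue 2 0 1 5 4 6)) (.blue 1 5 4 0 2 6)))) (.move 0 4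
   (.move 1 5
   (.move 1 4
   (.red 1 2 3 4) (.move 3 5
   (.red 1 2 3 5) (.blue 1 4 5 3 0 2))) (.move 1 3
   (.move 2 4
   (.red 1 2 4 3) (.blue 1 5 4 2 0 3)) (.blue 2 0 3 1 5 4))) (.move 1 5
   (.move 1 4
   (.red 1 2 3 4) (.move 3 5
   (.red 1 2 3 5) (.blue 1 4 5 3 0 2))) (.move 1 3
   (.move 2 4
   (.red 1 2 4 3) (.blue 1 5 4 2 0 3)) (.blue 2 0 3 1 5 4))))))

theorem strategyR5_ok :
    strategyR5.ok [(1, 2), (2, 3), (3, 4)] [(0, 1), (4, 5)] 6 = true := by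
  decide +kernel

/-- Case `R5`: in the online Ramsey game with targets red `C₄` and blue `P₆`,
from the position in which the five edges `v₁v₂, v₂v₃, v₃v₄, v₄v₅, v₅v₆` of a path on
six distinct vertices have been colored blue, red, red, red, blue respectively,
Builder can force a red copy of `C₄` or a blue copy of `P₆` within at most 6 additional
rounds (so within at most 11 rounds in total). -/
theorem builder_wins_case_R5 (v : Fin 6 → ℕ) (hv : Function.Injective v) :
    BuilderWinsIn (cycleGraph 4) (pathGraph 6)
      {s(v 1, v 2), s(v 2, v 3), s(v 3, v 4)}
      {s(v 0, v 1), s(v 4, v 5)} 6 := by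
  obtain ⟨w, hw⟩ := Infinite.exists_notMem_finset (Finset.univ.image v)
  have hw' : ∀ i, v i ≠ w := fun i h => hw (Finset.mem_image.2 ⟨i, Finset.mem_univ i, h⟩)
  have hf : Function.Injective (Fin.snoc v w : Fin 7 → ℕ) := by
    rw [Fin.snoc_injective_iff]
    refine ⟨hv, ?_⟩
    rintro ⟨i, hi⟩
    exact hw' i hi
  have h := Strat.sound hf strategyR5 _ _ _ strategyR5_ok
  have hR : listEdges (Fin.snoc v w : Fin 7 → ℕ) [(1, 2), (2, 3), (3, 4)] =
      {s(v 1, v 2), s(v 2, v 3), s(v 3, v 4)} := by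
    rw [listEdges_cons, listEdges_cons, listEdges_cons]
    ext e
    simp only [Set.mem_insert_iff, listEdges, List.not_mem_nil, false_and, exists_false,
      Set.setOf_false, Set.mem_empty_iff_false, or_false, Set.mem_singleton_iff]
    rfl
  have hB : listEdges (Fin.snoc v w : Fin 7 → ℕ) [(0, 1), (4, 5)] =
      {s(v 0, v 1), s(v 4, v 5)} := by
    rw [listEdges_cons, listEdges_cons]
    ext e
    simp only [Set.mem_insert_iff, listEdges, List.not_mem_nil, false_and, exists_false,
      Set.setOf_false, Set.mem_empty_iff_false, or_false, Set.mem_singleton_iff]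
    rfl
  rw [hR, hB] at h
  exact h
end

section
/- In the online Ramsey game with targets red C₄ and blue P₆, consider the position in which the five edges v₁v₂, v₂v₃, v₃v₄, v₄v₅, v₅v₆ of a path on six distinct vertices have been colored red, blue, red, blue, red respectively (case R9). From this position Builder can force a red copy of C₄ or a blue copy of P₆ within at most 6 additional rounds, so within at most 11 rounds in total. -/
open SimpleGraph

/-- A Builder strategy tree on seven vertices: either exhibit a red `C₄`, or a blue `P₆`,
or choose an edge and continue (first subtree: Painter answers red, second: blue). -/
inductive Strat_s19 where
  | red (a b c d : Fin 7) : Strat_s19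
  | blue (a b c d e f : Fin 7) : Strat_s19
  | node (a b : Fin 7) (onRed onBlue : Strat_s19) : Strat_s19

/-- Validity of a strategy tree from a position with a bound on the number of rounds. -/
def Strat_s19.check : Strat_s19 → List (Sym2 (Fin 7)) → List (Sym2 (Fin 7)) → ℕ → Bool
  | .red a b c d, R, _, _ => decide ([a, b, c, d].Nodup ∧
      s(a, b) ∈ R ∧ s(b, c) ∈ R ∧ s(c, d) ∈ R ∧ s(d, a) ∈ R)
  | .blue a b c d e f, _, B, _ => decide ([a, b, c, d, e, f].Nodup ∧
      s(a, b) ∈ B ∧ s(b, c) ∈ B ∧ s(c, d) ∈ B ∧ s(d, e) ∈ B ∧ s(e, f) ∈ B)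
  | .node _ _ _ _, _, _, 0 => false
  | .node a b x y, R, B, r + 1 => decide (a ≠ b ∧ s(a, b) ∉ R ∧ s(a, b) ∉ B) &&
      (x.check (s(a, b) :: R) B r && y.check R (s(a, b) :: B) r)

/-- The edges of the list `L`, transported to `ℕ` along `w`. -/
def edgeImg (w : Fin 7 → ℕ) (L : List (Sym2 (Fin 7))) : Set (Sym2 ℕ) :=
  {e | ∃ x ∈ L, Sym2.map w x = e}

lemma edgeImg_cons (w : Fin 7 → ℕ) (x : Sym2 (Fin 7)) (L : List (Sym2 (Fin 7))) :
    edgeImg w (x :: L) = insert (Sym2.map w x) (edgeImg w L) := by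
  ext e
  simp [edgeImg, eq_comm]

lemma mem_edgeImg {w : Fin 7 → ℕ} {L : List (Sym2 (Fin 7))} {a b : Fin 7}
    (h : s(a, b) ∈ L) : s(w a, w b) ∈ edgeImg w L := ⟨_, h, rfl⟩

lemma not_mem_edgeImg {w : Fin 7 → ℕ} (hw : Function.Injective w)
    {L : List (Sym2 (Fin 7))} {x : Sym2 (Fin 7)}
    (h : x ∉ L) : Sym2.map w x ∉ edgeImg w L := by
  rintro ⟨y, hy, he⟩
  exact h (Sym2.map.injective hw he ▸ hy)

lemma wins_of_copy {V W : Type*} {G : SimpleGraph V} {H : SimpleGraph W}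
    {R B : Set (Sym2 ℕ)} (h : HasCopy G R ∨ HasCopy H B) (r : ℕ) :
    BuilderWinsIn G H R B r := by
  cases r with
  | zero => exact h
  | succ r => exact h.elim Or.inl (fun h => Or.inr (Or.inl h))

lemma copy_C4 {w : Fin 7 → ℕ} (hw : Function.Injective w) {L : List (Sym2 (Fin 7))}
    {a b c d : Fin 7} (hn : [a, b, c, d].Nodup)
    (h1 : s(a, b) ∈ L) (h2 : s(b, c) ∈ L) (h3 : s(c, d) ∈ L) (h4 : s(d, a) ∈ L) :
    HasCopy (cycleGraph 4) (edgeImg w L) := by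
  refine ⟨fun i => w ([a, b, c, d].get i), hw.comp (List.nodup_iff_injective_get.1 hn), ?_⟩
  have e1 := mem_edgeImg (w := w) h1
  have e2 := mem_edgeImg (w := w) h2
  have e3 := mem_edgeImg (w := w) h3
  have e4 := mem_edgeImg (w := w) h4
  have key : ∀ i j : Fin 4, (cycleGraph 4).Adj i j →
      (i, j) ∈ [((0 : Fin 4), (1 : Fin 4)), (1, 0), (1, 2), (2, 1), (2, 3), (3, 2),
        (3, 0), (0, 3)] := by decide
  intro i j hij
  have := key i j hij
  simp only [List.mem_cons, Prod.mk.injEq, List.not_mem_nil, or_false] at this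
  rcases this with ⟨rfl, rfl⟩ | ⟨rfl, rfl⟩ | ⟨rfl, rfl⟩ | ⟨rfl, rfl⟩ | ⟨rfl, rfl⟩ |
    ⟨rfl, rfl⟩ | ⟨rfl, rfl⟩ | ⟨rfl, rfl⟩
  · exact e1
  · exact Sym2.eq_swap ▸ e1
  · exact e2
  · exact Sym2.eq_swap ▸ e2
  · exact e3
  · exact Sym2.eq_swap ▸ e3
  · exact e4
  · exact Sym2.eq_swap ▸ e4

lemma copy_P6 {w : Fin 7 → ℕ} (hw : Function.Injective w) {L : List (Sym2 (Fin 7))}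
    {a b c d e f : Fin 7} (hn : [a, b, c, d, e, f].Nodup)
    (h1 : s(a, b) ∈ L) (h2 : s(b, c) ∈ L) (h3 : s(c, d) ∈ L) (h4 : s(d, e) ∈ L)
    (h5 : s(e, f) ∈ L) :
    HasCopy (pathGraph 6) (edgeImg w L) := by
  refine ⟨fun i => w ([a, b, c, d, e, f].get i),
    hw.comp (List.nodup_iff_injective_get.1 hn), ?_⟩
  have e1 := mem_edgeImg (w := w) h1
  have e2 := mem_edgeImg (w := w) h2
  have e3 := mem_edgeImg (w := w) h3
  have e4 := mem_edgeImg (w := w) h4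
  have e5 := mem_edgeImg (w := w) h5
  have key : ∀ i j : Fin 6, (i.val + 1 = j.val ∨ j.val + 1 = i.val) →
      (i, j) ∈ [((0 : Fin 6), (1 : Fin 6)), (1, 0), (1, 2), (2, 1), (2, 3), (3, 2),
        (3, 4), (4, 3), (4, 5), (5, 4)] := by decide
  intro i j hij
  have := key i j (pathGraph_adj.1 hij)
  simp only [List.mem_cons, Prod.mk.injEq, List.not_mem_nil, or_false] at this
  rcases this with ⟨rfl, rfl⟩ | ⟨rfl, rfl⟩ | ⟨rfl, rfl⟩ | ⟨rfl, rfl⟩ | ⟨rfl, rfl⟩ |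
    ⟨rfl, rfl⟩ | ⟨rfl, rfl⟩ | ⟨rfl, rfl⟩ | ⟨rfl, rfl⟩ | ⟨rfl, rfl⟩
  · exact e1
  · exact Sym2.eq_swap ▸ e1
  · exact e2
  · exact Sym2.eq_swap ▸ e2
  · exact e3
  · exact Sym2.eq_swap ▸ e3
  · exact e4
  · exact Sym2.eq_swap ▸ e4
  · exact e5
  · exact Sym2.eq_swap ▸ e5

/-- A valid strategy tree yields a win for Builder. -/
lemma Strat_s19.sound {w : Fin 7 → ℕ} (hw : Function.Injective w) (t : Strat_s19) :
    ∀ (R B : List (Sym2 (Fin 7))) (r : ℕ), t.check R B r = true →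
      BuilderWinsIn (cycleGraph 4) (pathGraph 6) (edgeImg w R) (edgeImg w B) r := by
  induction t with
  | red a b c d =>
    intro R B r h
    obtain ⟨hn, h1, h2, h3, h4⟩ := of_decide_eq_true h
    exact wins_of_copy (Or.inl (copy_C4 hw hn h1 h2 h3 h4)) r
  | blue a b c d e f =>
    intro R B r h
    obtain ⟨hn, h1, h2, h3, h4, h5⟩ := of_decide_eq_true h
    exact wins_of_copy (Or.inr (copy_P6 hw hn h1 h2 h3 h4 h5)) r
  | node a b x y ihx ihy =>
    intro R B r h
    cases r with
    | zero => exact absurd h Bool.false_ne_true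
    | succ r =>
      simp only [Strat_s19.check, Bool.and_eq_true, decide_eq_true_eq] at h
      obtain ⟨⟨hab, hR, hB⟩, hx, hy⟩ := h
      have hx' := ihx _ _ _ hx
      have hy' := ihy _ _ _ hy
      rw [edgeImg_cons] at hx' hy'
      refine Or.inr (Or.inr ⟨Sym2.map w s(a, b), ?_, not_mem_edgeImg hw hR,
        not_mem_edgeImg hw hB, hx', hy'⟩)
      simpa using hw.ne hab

/-- Builder's strategy; vertices `0,…,5` are `v₁,…,v₆` and `6` is a fresh vertex. -/
def stratR9 : Strat_s19 :=
  (.node 0 2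
    (.node 1 3
      (.red 0 1 3 2)
      (.node 0 4
        (.node 2 5
          (.red 0 2 5 4)
          (.node 2 6
            (.node 4 6
              (.red 0 2 6 4)
              (.blue 5 2 1 3 4 6))
            (.node 1 5
              (.red 0 1 5 4)
              (.blue 4 3 1 5 2 6))))
        (.node 0 5
          (.node 2 4
            (.red 0 2 4 5)
            (.node 3 5
              (.red 0 2 3 5)
              (.blue 0 4 2 1 3 5)))
          (.blue 2 1 3 4 0 5))))
    (.node 0 3
      (.node 1 3
        (.node 0 4
          (.node 1 4
            (.red 0 3 1 4)
            (.node 3 5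
              (.red 0 3 5 4)
              (.blue 0 2 1 4 3 5)))
          (.node 1 5
            (.node 3 5
              (.red 0 1 5 3)
              (.blue 1 2 0 4 3 5))
            (.blue 3 4 0 2 1 5)))
        (.node 0 5
          (.node 0 6
            (.node 4 6
              (.red 0 5 4 6)
              (.blue 0 2 1 3 4 6))
            (.blue 4 3 1 2 0 6))
          (.blue 4 3 1 2 0 5)))
      (.node 1 5
        (.node 0 4
          (.red 0 1 5 4)
          (.node 1 6
            (.node 4 6
              (.red 1 5 4 6)
              (.blue 1 2 0 3 4 6))
            (.blue 3 4 0 2 1 6)))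
        (.blue 4 3 0 2 1 5))))

lemma stratR9_check : stratR9.check [s(0, 1), s(2, 3), s(4, 5)] [s(1, 2), s(3, 4)] 6 = true := by
  decide

/-- Case `R9`: in the online Ramsey game with targets red `C₄` and blue `P₆`,
from the position in which the five edges `v₁v₂, v₂v₃, v₃v₄, v₄v₅, v₅v₆` of a path on
six distinct vertices have been colored red, blue, red, blue, red respectively,
Builder can force a red copy of `C₄` or a blue copy of `P₆` within at most 6 additional
rounds (so within at most 11 rounds in total). -/
theorem builder_wins_case_R9 (v : Fin 6 → ℕ) (hv : Function.Injective v) :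
    BuilderWinsIn (cycleGraph 4) (pathGraph 6)
      {s(v 0, v 1), s(v 2, v 3), s(v 4, v 5)}
      {s(v 1, v 2), s(v 3, v 4)} 6 := by
  obtain ⟨z, hz⟩ : ∃ z, z ∉ Set.range v := (Set.finite_range v).exists_notMem
  have hw : Function.Injective (Fin.snoc v z : Fin 7 → ℕ) :=
    Fin.snoc_injective_iff.2 ⟨hv, hz⟩
  have h := Strat_s19.sound hw stratR9 _ _ _ stratR9_check
  have e : ∀ i : Fin 6, (Fin.snoc v z : Fin 7 → ℕ) i.castSucc = v i := fun i => by simp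
  have e0 : (Fin.snoc v z : Fin 7 → ℕ) 0 = v 0 := e 0
  have e1 : (Fin.snoc v z : Fin 7 → ℕ) 1 = v 1 := e 1
  have e2 : (Fin.snoc v z : Fin 7 → ℕ) 2 = v 2 := e 2
  have e3 : (Fin.snoc v z : Fin 7 → ℕ) 3 = v 3 := e 3
  have e4 : (Fin.snoc v z : Fin 7 → ℕ) 4 = v 4 := e 4
  have e5 : (Fin.snoc v z : Fin 7 → ℕ) 5 = v 5 := e 5
  have hnil : edgeImg (Fin.snoc v z : Fin 7 → ℕ) [] = ∅ := by
    ext x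
    simp [edgeImg]
  simp only [edgeImg_cons, hnil, Sym2.map_mk, e0, e1, e2, e3, e4, e5,
    insert_empty_eq] at h
  exact h
end
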